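/- For all real q, ρ₁, ρ₂ with |q| < 1, 0 < |ρ₁| < 1, 0 < |ρ₂| < 1, and all x, y, z ∈ S(q), the series Σ_{n=0}^∞ (ρ₂ⁿ/([n]_q!·(ρ₁²;q)_n))·P_n(x|z,ρ₁,q)·P_n(y|z,ρ₁/ρ₂,q) converges and equals the reciprocal of Σ_{n=0}^∞ (ρ₁ⁿ/([n]_q!·(ρ₂²;q)_n))·P_n(x|y,ρ₂,q)·P_n(z|y,ρ₂/ρ₁,q); in particular the latter sum is nonzero. -/

import Mathlib

noncomputable section

open Finset

/-- The q-integer `[n]_q = 1 + q + ⋯ + q^{n-1}`. -/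
def qInt (q : ℝ) (n : ℕ) : ℝ := ∑ i ∈ Finset.range n, q ^ i

/-- The q-factorial `[n]_q!`. -/
def qFact (q : ℝ) (n : ℕ) : ℝ := ∏ j ∈ Finset.range n, qInt q (j + 1)

/-- The q-binomial coefficient. -/
def qBinom (q : ℝ) (n k : ℕ) : ℝ :=
  if k ≤ n then qFact q n / (qFact q (n - k) * qFact q k) else 0

/-- The finite q-Pochhammer symbol `(a;q)_n`. -/
def qPoch (a q : ℝ) (n : ℕ) : ℝ := ∏ j ∈ Finset.range n, (1 - a * q ^ j)

/-- The infinite q-Pochhammer symbol `(a;q)_∞`. -/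
def qPochInf (a q : ℝ) : ℝ := ∏' j : ℕ, (1 - a * q ^ j)

/-- The q-Hermite polynomials `H_n(x|q)`. -/
def qHermite (q : ℝ) : ℕ → ℝ → ℝ
  | 0, _ => 1
  | 1, x => x
  | n + 2, x => x * qHermite q (n + 1) x - qInt q (n + 1) * qHermite q n x

/-- The rescaled q-ultraspherical polynomials `R_n(x|β,q)`. -/
def qUltra (q β : ℝ) : ℕ → ℝ → ℝ
  | 0, _ => 1
  | 1, x => (1 - β) * x
  | n + 2, x => (1 - β * q ^ (n + 1)) * x * qUltra q β (n + 1) x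
      - (1 - β ^ 2 * q ^ n) * qInt q (n + 1) * qUltra q β n x

/-- The Al-Salam–Chihara polynomials `P_n(x|y,ρ,q)`. -/
def ASC (q y ρ : ℝ) : ℕ → ℝ → ℝ
  | 0, _ => 1
  | 1, x => x - ρ * y
  | n + 2, x => (x - ρ * y * q ^ (n + 1)) * ASC q y ρ (n + 1) x
      - (1 - ρ ^ 2 * q ^ n) * qInt q (n + 1) * ASC q y ρ n x

/-- The polynomials `B_n(y|q)` (q⁻¹-Hermite related). -/
def qB (q : ℝ) : ℕ → ℝ → ℝ
  | 0, _ => 1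
  | 1, y => -y
  | n + 2, y => -q ^ (n + 1) * y * qB q (n + 1) y + q ^ n * qInt q (n + 1) * qB q n y

/-- The big q-Hermite polynomials `H_n(x|a,q)`. -/
def bigqHermite (q a : ℝ) : ℕ → ℝ → ℝ
  | 0, _ => 1
  | 1, x => x - a
  | n + 2, x => (x - a * q ^ (n + 1)) * bigqHermite q a (n + 1) x
      - qInt q (n + 1) * bigqHermite q a n x

/-- The probabilistic Hermite polynomials `H_n(x)`. -/
def probHermite : ℕ → ℝ → ℝ
  | 0, _ => 1
  | 1, x => x
  | n + 2, x => x * probHermite (n + 1) x - (n + 1) * probHermite n x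

/-- The probabilistic Hermite polynomials on ℂ. -/
def probHermiteC : ℕ → ℂ → ℂ
  | 0, _ => 1
  | 1, x => x
  | n + 2, x => x * probHermiteC (n + 1) x - (n + 1) * probHermiteC n x

/-- The Chebyshev polynomials of the second kind. -/
def chebU : ℕ → ℝ → ℝ
  | 0, _ => 1
  | 1, x => 2 * x
  | n + 2, x => 2 * x * chebU (n + 1) x - chebU n x

/-- The Chebyshev polynomials of the first kind. -/
def chebT : ℕ → ℝ → ℝ
  | 0, _ => 1
  | 1, x => x
  | n + 2, x => 2 * x * chebT (n + 1) x - chebT n x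

/-- `W_k(x,y,t|q)`. -/
def Wk (q x y t : ℝ) (k : ℕ) : ℝ :=
  (1 - t ^ 2 * q ^ (2 * k)) ^ 2 - (1 - q) * x * y * t * q ^ k * (1 + t ^ 2 * q ^ (2 * k))
    + (1 - q) * t ^ 2 * q ^ (2 * k) * (x ^ 2 + y ^ 2)

/-- `V_k(x,a|q)`. -/
def Vk (q x a : ℝ) (k : ℕ) : ℝ :=
  1 - (1 - q) * a * x * q ^ k + (1 - q) * a ^ 2 * q ^ (2 * k)

/-- `L_k(x,a|q)`. -/
def Lk (q x a : ℝ) (k : ℕ) : ℝ :=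
  (1 + a * q ^ k) ^ 2 - (1 - q) * x ^ 2 * a ^ 2 * q ^ k

/-- The support interval `S(q) = [-2/√(1-q), 2/√(1-q)]` for `|q| < 1`. -/
def Sq (q : ℝ) : Set ℝ := Set.Icc (-(2 / Real.sqrt (1 - q))) (2 / Real.sqrt (1 - q))

/-! ### Elementary facts on `q`-numbers -/

lemma one_sub_mul_qInt (q : ℝ) (n : ℕ) : (1 - q) * qInt q n = 1 - q ^ n :=
  mul_neg_geom_sum q n

lemma qInt_zero (q : ℝ) : qInt q 0 = 0 := by simp [qInt]

lemma qInt_add (q : ℝ) (m n : ℕ) : qInt q (m + n) = qInt q m + q ^ m * qInt q n := by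
  simp only [qInt, Finset.sum_range_add, Finset.mul_sum, pow_add]

lemma pow_lt_one_of_abs_lt_one {q : ℝ} (hq : |q| < 1) (n : ℕ) : q ^ (n + 1) < 1 :=
  (le_abs_self _).trans_lt (by
    rw [abs_pow]; exact pow_lt_one₀ (abs_nonneg q) hq n.succ_ne_zero)

lemma qInt_succ_pos {q : ℝ} (hq : |q| < 1) (n : ℕ) : 0 < qInt q (n + 1) := by
  have h := one_sub_mul_qInt q (n + 1)
  have h1 : 0 < 1 - q := by linarith [(abs_lt.mp hq).2]
  have h2 := pow_lt_one_of_abs_lt_one hq n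
  exact pos_of_mul_pos_right (by rw [h]; linarith) h1.le

lemma qFact_succ (q : ℝ) (n : ℕ) : qFact q (n + 1) = qFact q n * qInt q (n + 1) :=
  Finset.prod_range_succ _ _

lemma qFact_pos {q : ℝ} (hq : |q| < 1) (n : ℕ) : 0 < qFact q n :=
  Finset.prod_pos fun j _ => qInt_succ_pos hq j

lemma qPoch_succ (a q : ℝ) (n : ℕ) : qPoch a q (n + 1) = qPoch a q n * (1 - a * q ^ n) :=
  Finset.prod_range_succ _ _

lemma qPoch_sq_ne_zero {q ρ : ℝ} (hq : |q| < 1) (hρ : |ρ| < 1) (n : ℕ) :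
    qPoch (ρ ^ 2) q n ≠ 0 := by
  refine Finset.prod_ne_zero_iff.mpr fun j _ => ?_
  have h1 : |ρ ^ 2 * q ^ j| < 1 := by
    rw [abs_mul, abs_pow, abs_pow]
    have := pow_lt_one₀ (abs_nonneg ρ) hρ two_ne_zero
    have := pow_le_one₀ (n := j) (abs_nonneg q) hq.le
    nlinarith [abs_nonneg ρ, pow_nonneg (abs_nonneg q) j, pow_nonneg (abs_nonneg ρ) 2]
  have := (abs_lt.mp h1).2
  intro h
  linarith

lemma qHermite_succ (q x : ℝ) (n : ℕ) :
    qHermite q (n + 1) x = x * qHermite q n x - qInt q n * qHermite q (n - 1) x := by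
  cases n <;> simp [qHermite, qInt_zero]

lemma ASC_succ_succ (q y ρ x : ℝ) (n : ℕ) :
    ASC q y ρ (n + 2) x = (x - ρ * y * q ^ (n + 1)) * ASC q y ρ (n + 1) x
      - (1 - ρ ^ 2 * q ^ n) * qInt q (n + 1) * ASC q y ρ n x := rfl

lemma ASC_zero_param (q y : ℝ) (n : ℕ) (x : ℝ) : ASC q y 0 n x = qHermite q n x := by
  induction n using Nat.twoStepInduction with
  | zero => rfl
  | one => simp [ASC, qHermite]
  | more n h0 h1 => simp [ASC, qHermite, h0, h1]

/-! ### Subexponential growth -/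

lemma exists_le_mul_pow_of_eventually {E : ℕ → ℝ} {R : ℝ} (hE : ∀ n, 0 ≤ E n) (hR : 1 < R)
    (h : ∀ᶠ n in Filter.atTop, E (n + 1) ≤ R * E n) : ∃ C, 0 ≤ C ∧ ∀ n, E n ≤ C * R ^ n := by
  obtain ⟨N, hN⟩ := Filter.eventually_atTop.mp h
  have hC : 0 ≤ ∑ i ∈ Finset.range (N + 1), E i := Finset.sum_nonneg fun i _ => hE i
  have small : ∀ n ≤ N, E n ≤ (∑ i ∈ Finset.range (N + 1), E i) * R ^ n := fun n hn =>
    (Finset.single_le_sum (fun i _ => hE i) (by simp; omega)).trans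
      (le_mul_of_one_le_right hC (one_le_pow₀ hR.le))
  refine ⟨_, hC, fun n => ?_⟩
  rcases le_total n N with hn | hn
  · exact small n hn
  · induction n, hn using Nat.le_induction with
    | base => exact small N le_rfl
    | succ k hk ih =>
      calc E (k + 1) ≤ R * E k := hN k hk
        _ ≤ R * (_ * R ^ k) := by gcongr
        _ = _ := by ring

/-- Solutions of a vanishing perturbation of the recurrence `a (n+2) = c * a (n+1) - a n` with
`|c| ≤ 2` grow subexponentially. -/
lemma exists_abs_le_mul_pow_of_recurrence {a α β : ℕ → ℝ} {c R : ℝ} (hc : |c| ≤ 2)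
    (ha : ∀ n, a (n + 2) = (c + α n) * a (n + 1) - (1 + β n) * a n)
    (hα : Filter.Tendsto α Filter.atTop (nhds 0)) (hβ : Filter.Tendsto β Filter.atTop (nhds 0))
    (hR : 1 < R) : ∃ C, 0 ≤ C ∧ ∀ n, |a n| ≤ C * R ^ n := by
  obtain ⟨ε, hε, rfl⟩ : ∃ ε, 0 < ε ∧ R = 1 + ε := ⟨R - 1, by linarith, by ring⟩
  set u : ℂ := ⟨c / 2, Real.sqrt (1 - (c / 2) ^ 2)⟩ with hu
  have hc2 : 0 ≤ 1 - (c / 2) ^ 2 := by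
    have := sq_le_sq' (by linarith [abs_nonneg c]) hc
    rw [sq_abs] at this
    linarith
  have huu : u * starRingEnd ℂ u = 1 := by
    rw [Complex.mul_conj, Complex.normSq_mk, Real.mul_self_sqrt hc2]
    norm_num; ring
  have hsum : u + starRingEnd ℂ u = c := by
    rw [Complex.add_conj]; simp [hu]; ring
  have hnorm : ‖u‖ = 1 := by
    have h := congrArg norm huu
    rw [norm_mul, Complex.norm_conj, norm_one] at h
    nlinarith [norm_nonneg u]
  set v : ℕ → ℂ := fun n => a (n + 1) - u * a n with hv
  have va : ∀ n, (a (n + 1) : ℂ) = v n + u * a n := fun n => by simp [hv]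
  have hvs : ∀ n, v (n + 1) = starRingEnd ℂ u * v n + α n * (v n + u * a n) - β n * a n := by
    intro n
    rw [← va]
    simp only [hv, ha n]
    push_cast
    rw [← hsum]
    linear_combination (a n : ℂ) * huu
  have bound_a : ∀ n, |a (n + 1)| ≤ |a n| + ‖v n‖ := by
    intro n
    have h := norm_add_le (v n) (u * a n)
    rw [← va, norm_mul, hnorm, Complex.norm_real, Complex.norm_real, Real.norm_eq_abs,
      Real.norm_eq_abs] at h
    linarith
  have bound_v : ∀ n, ‖v (n + 1)‖ ≤ ‖v n‖ + |α n| * (‖v n‖ + |a n|) + |β n| * |a n| := by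
    intro n
    rw [hvs]
    refine (norm_sub_le _ _).trans (add_le_add ((norm_add_le _ _).trans (add_le_add ?_ ?_)) ?_)
    · rw [norm_mul, Complex.norm_conj, hnorm, one_mul]
    · rw [norm_mul, Complex.norm_real, Real.norm_eq_abs]
      gcongr
      refine (norm_add_le _ _).trans ?_
      rw [norm_mul, hnorm, one_mul, Complex.norm_real, Real.norm_eq_abs]
    · rw [norm_mul, Complex.norm_real, Complex.norm_real, Real.norm_eq_abs, Real.norm_eq_abs]
  have hδ : 0 < min (ε ^ 2 / 4) (ε / 2) := by positivity
  have key : ∀ᶠ n in Filter.atTop,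
      |a (n + 1)| + 2 / ε * ‖v (n + 1)‖ ≤ (1 + ε) * (|a n| + 2 / ε * ‖v n‖) := by
    filter_upwards [(Metric.tendsto_nhds.mp hα) _ hδ, (Metric.tendsto_nhds.mp hβ) _ hδ]
      with n h1 h2
    rw [Real.dist_eq, sub_zero, lt_min_iff] at h1 h2
    have e1 : 2 / ε * (|α n| + |β n|) ≤ ε := by
      rw [div_mul_eq_mul_div, div_le_iff₀ hε]; nlinarith
    have e2 : 2 / ε * |α n| ≤ 1 := by
      rw [div_mul_eq_mul_div, div_le_iff₀ hε]; linarith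
    have e3 : ε * (2 / ε) = 2 := by field_simp
    have hA : 0 < 2 / ε := by positivity
    calc |a (n + 1)| + 2 / ε * ‖v (n + 1)‖
        ≤ (|a n| + ‖v n‖) + 2 / ε * (‖v n‖ + |α n| * (‖v n‖ + |a n|) + |β n| * |a n|) :=
          add_le_add (bound_a n) (mul_le_mul_of_nonneg_left (bound_v n) hA.le)
      _ = |a n| + (2 / ε * (|α n| + |β n|)) * |a n| + 2 / ε * ‖v n‖
          + (1 + 2 / ε * |α n|) * ‖v n‖ := by ring
      _ ≤ |a n| + ε * |a n| + 2 / ε * ‖v n‖ + (ε * (2 / ε)) * ‖v n‖ := by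
          gcongr
          linarith
      _ = _ := by ring
  obtain ⟨C, hC, h⟩ := exists_le_mul_pow_of_eventually
    (E := fun n => |a n| + 2 / ε * ‖v n‖) (fun n => by positivity) hR key
  exact ⟨C, hC, fun n => (le_add_of_nonneg_right (by positivity)).trans (h n)⟩

lemma exists_abs_ASC_le {q x R : ℝ} (hq : |q| < 1) (hx : x ∈ Sq q) (y ρ : ℝ) (hR : 1 < R) :
    ∃ C, 0 ≤ C ∧ ∀ n, |Real.sqrt (1 - q) ^ n * ASC q y ρ n x| ≤ C * R ^ n := by
  have h1q : 0 < 1 - q := by linarith [(abs_lt.mp hq).2]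
  have hs : 0 < Real.sqrt (1 - q) := Real.sqrt_pos.mpr h1q
  have hs2 : Real.sqrt (1 - q) ^ 2 = 1 - q := Real.sq_sqrt h1q.le
  have hq0 := tendsto_pow_atTop_nhds_zero_of_abs_lt_one hq
  have hq1 := (Filter.tendsto_add_atTop_iff_nat 1).mpr hq0
  refine exists_abs_le_mul_pow_of_recurrence (c := Real.sqrt (1 - q) * x)
    (α := fun n => -(Real.sqrt (1 - q) * ρ * y) * q ^ (n + 1))
    (β := fun n => (1 - ρ ^ 2 * q ^ n) * (1 - q ^ (n + 1)) - 1) ?_ (fun n => ?_) ?_ ?_ hR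
  · rw [abs_mul, abs_of_pos hs, mul_comm, ← le_div_iff₀ hs]
    exact abs_le.mpr hx
  · rw [ASC_succ_succ]
    linear_combination (-(1 - ρ ^ 2 * q ^ n) * Real.sqrt (1 - q) ^ n * ASC q y ρ n x) *
      (qInt q (n + 1) * hs2 + one_sub_mul_qInt q (n + 1))
  · simpa using hq1.const_mul (-(Real.sqrt (1 - q) * ρ * y))
  · simpa using (((hq0.const_mul (ρ ^ 2)).const_sub 1).mul (hq1.const_sub 1)).sub_const 1

lemma exists_abs_qHermite_le {q x R : ℝ} (hq : |q| < 1) (hx : x ∈ Sq q) (hR : 1 < R) :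
    ∃ C, 0 ≤ C ∧ ∀ n, |Real.sqrt (1 - q) ^ n * qHermite q n x| ≤ C * R ^ n := by
  simpa only [ASC_zero_param] using exists_abs_ASC_le hq hx 0 0 hR

lemma exists_inv_qFact_le {q R : ℝ} (hq : |q| < 1) (hR : 1 < R) :
    ∃ C, 0 ≤ C ∧ ∀ n, (qFact q n * (1 - q) ^ n)⁻¹ ≤ C * R ^ n := by
  have h1q : 0 < 1 - q := by linarith [(abs_lt.mp hq).2]
  have hpos : ∀ n, 0 < qFact q n * (1 - q) ^ n := fun n =>
    mul_pos (qFact_pos hq n) (pow_pos h1q n)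
  refine exists_le_mul_pow_of_eventually (fun n => (inv_pos.mpr (hpos n)).le) hR ?_
  have hq1 := (Filter.tendsto_add_atTop_iff_nat 1).mpr
    (tendsto_pow_atTop_nhds_zero_of_abs_lt_one hq)
  have hlim : Filter.Tendsto (fun n => (1 - q ^ (n + 1))⁻¹) Filter.atTop (nhds 1) := by
    simpa using (hq1.const_sub 1).inv₀ (by norm_num)
  filter_upwards [hlim.eventually_le_const hR] with n hn
  have h : qFact q (n + 1) * (1 - q) ^ (n + 1)
      = (1 - q ^ (n + 1)) * (qFact q n * (1 - q) ^ n) := by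
    rw [qFact_succ, ← one_sub_mul_qInt]; ring
  rw [h, mul_inv]
  exact mul_le_mul_of_nonneg_right hn (inv_pos.mpr (hpos n)).le

lemma exists_one_lt_pow_three_mul_lt_one {a b : ℝ} (ha : a < 1) (hb : b < 1) :
    ∃ R : ℝ, 1 < R ∧ R ^ 3 * a < 1 ∧ R ^ 3 * b < 1 := by
  have h : ∀ t : ℝ, t < 1 → ∀ᶠ R : ℝ in nhdsWithin 1 (Set.Ioi 1), R ^ 3 * t < 1 := fun t ht =>
    (((by fun_prop : Continuous fun R : ℝ => R ^ 3 * t).tendsto 1).mono_left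
      nhdsWithin_le_nhds).eventually_lt_const (by simpa using ht)
  exact (eventually_mem_nhdsWithin.and ((h a ha).and (h b hb))).exists

/-! ### The Carlitz series -/

/-- The terms of the shifted Poisson–Mehler series. -/
def mehlerTerm (q ρ y x : ℝ) (m j : ℕ) : ℝ :=
  ρ ^ j / qFact q j * qHermite q j y * qHermite q (j + m) x

/-- The shifted Poisson–Mehler series; `m = 0` is the Poisson–Mehler kernel. -/
def mehlerSum (q ρ y x : ℝ) (m : ℕ) : ℝ := ∑' j, mehlerTerm q ρ y x m j

/-- The kernel identity is obtained by summing this double series along rows and along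
antidiagonals. -/
lemma summable_double {q ρ₁ ρ₂ x y z : ℝ} (r : ℝ) (hq : |q| < 1) (h1 : |ρ₁| < 1) (h2 : |ρ₂| < 1)
    (hx : x ∈ Sq q) (hy : y ∈ Sq q) (hz : z ∈ Sq q) :
    Summable fun p : ℕ × ℕ =>
      ρ₁ ^ p.1 / qFact q p.1 * ASC q y r p.1 z * mehlerTerm q ρ₂ y x p.1 p.2 := by
  obtain ⟨R, hR, hR1, hR2⟩ := exists_one_lt_pow_three_mul_lt_one h1 h2
  have h1q : 0 < 1 - q := by linarith [(abs_lt.mp hq).2]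
  have hs : 0 < Real.sqrt (1 - q) := Real.sqrt_pos.mpr h1q
  have hs2 : Real.sqrt (1 - q) ^ 2 = 1 - q := Real.sq_sqrt h1q.le
  obtain ⟨A, hA, hA'⟩ := exists_inv_qFact_le hq hR
  obtain ⟨B, hB, hB'⟩ := exists_abs_ASC_le hq hz y r hR
  obtain ⟨D, hD, hD'⟩ := exists_abs_qHermite_le hq hy hR
  obtain ⟨F, hF, hF'⟩ := exists_abs_qHermite_le hq hx hR
  have hR0 : 0 < R := by linarith
  have hg : Summable fun p : ℕ × ℕ => (R ^ 3 * |ρ₁|) ^ p.1 * (R ^ 3 * |ρ₂|) ^ p.2 :=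
    (summable_geometric_of_lt_one (by positivity) hR1).mul_of_nonneg
      (summable_geometric_of_lt_one (by positivity) hR2)
      (fun _ => by positivity) (fun _ => by positivity)
  refine Summable.of_norm_bounded (hg.mul_left (A * A * B * D * F)) ?_
  rintro ⟨n, j⟩
  have hfn := qFact_pos hq n
  have hfj := qFact_pos hq j
  set s := Real.sqrt (1 - q)
  have e : ρ₁ ^ n / qFact q n * ASC q y r n z * mehlerTerm q ρ₂ y x n j
      = ρ₁ ^ n * ρ₂ ^ j * (qFact q n * (1 - q) ^ n)⁻¹ * (qFact q j * (1 - q) ^ j)⁻¹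
        * (s ^ n * ASC q y r n z) * (s ^ j * qHermite q j y)
        * (s ^ (j + n) * qHermite q (j + n) x) := by
    rw [mehlerTerm, ← hs2]
    field_simp
    ring
  have pos : ∀ n, 0 < (qFact q n * (1 - q) ^ n)⁻¹ := fun n =>
    inv_pos.mpr (mul_pos (qFact_pos hq n) (pow_pos h1q n))
  simp only [Real.norm_eq_abs]
  rw [e]
  simp only [abs_mul _ (s ^ n * _), abs_mul _ (s ^ j * _), abs_mul _ (s ^ (j + n) * _),
    abs_mul _ (_⁻¹), abs_of_pos (pos _), abs_mul (ρ₁ ^ n), abs_pow]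
  calc |ρ₁| ^ n * |ρ₂| ^ j * (qFact q n * (1 - q) ^ n)⁻¹ * (qFact q j * (1 - q) ^ j)⁻¹
        * |s ^ n * ASC q y r n z| * |s ^ j * qHermite q j y|
        * |s ^ (j + n) * qHermite q (j + n) x|
      ≤ |ρ₁| ^ n * |ρ₂| ^ j * (A * R ^ n) * (A * R ^ j) * (B * R ^ n) * (D * R ^ j)
        * (F * R ^ (j + n)) := by
        have := pos n
        have := pos j
        gcongr
        exacts [hA' n, hA' j, hB' n, hD' j, hF' (j + n)]
    _ = _ := by ring

lemma summable_mehlerTerm {q ρ x y : ℝ} (hq : |q| < 1) (hρ : |ρ| < 1)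
    (hx : x ∈ Sq q) (hy : y ∈ Sq q) (m : ℕ) : Summable (mehlerTerm q ρ y x m) := by
  obtain ⟨R, hR, hR1, -⟩ := exists_one_lt_pow_three_mul_lt_one hρ hρ
  have h1q : 0 < 1 - q := by linarith [(abs_lt.mp hq).2]
  have hs : 0 < Real.sqrt (1 - q) := Real.sqrt_pos.mpr h1q
  have hs2 : Real.sqrt (1 - q) ^ 2 = 1 - q := Real.sq_sqrt h1q.le
  obtain ⟨A, hA, hA'⟩ := exists_inv_qFact_le hq hR
  obtain ⟨D, hD, hD'⟩ := exists_abs_qHermite_le hq hy hR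
  obtain ⟨F, hF, hF'⟩ := exists_abs_qHermite_le hq hx hR
  have hR0 : 0 < R := by linarith
  set s := Real.sqrt (1 - q)
  refine Summable.of_norm_bounded ((summable_geometric_of_lt_one (by positivity) hR1).mul_left
    (A * D * F * R ^ m * (s ^ m)⁻¹)) fun j => ?_
  have hfj := qFact_pos hq j
  have e : mehlerTerm q ρ y x m j = ρ ^ j * (s ^ m)⁻¹ * (qFact q j * (1 - q) ^ j)⁻¹
        * (s ^ j * qHermite q j y) * (s ^ (j + m) * qHermite q (j + m) x) := by
    rw [mehlerTerm, ← hs2]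
    field_simp
    ring
  have pos : 0 < (qFact q j * (1 - q) ^ j)⁻¹ := inv_pos.mpr (mul_pos hfj (pow_pos h1q j))
  have pos' : 0 < (s ^ m)⁻¹ := by positivity
  rw [Real.norm_eq_abs, e]
  simp only [abs_mul _ (s ^ j * _), abs_mul _ (s ^ (j + m) * _),
    abs_mul _ (_⁻¹), abs_of_pos pos, abs_of_pos pos', abs_pow ρ]
  calc |ρ| ^ j * (s ^ m)⁻¹ * (qFact q j * (1 - q) ^ j)⁻¹
        * |s ^ j * qHermite q j y| * |s ^ (j + m) * qHermite q (j + m) x|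
      ≤ |ρ| ^ j * (s ^ m)⁻¹ * (A * R ^ j) * (D * R ^ j) * (F * R ^ (j + m)) := by
        gcongr
        exacts [hA' j, hD' j, hF' (j + m)]
    _ = _ := by ring

lemma mehlerSum_recurrence {q ρ x y : ℝ} (hq : |q| < 1) (hρ : |ρ| < 1)
    (hx : x ∈ Sq q) (hy : y ∈ Sq q) (m : ℕ) :
    (1 - ρ ^ 2 * q ^ m) * mehlerSum q ρ y x (m + 1)
      = (x - ρ * y * q ^ m) * mehlerSum q ρ y x m - qInt q m * mehlerSum q ρ y x (m - 1) := by
  have hS : ∀ k, HasSum (mehlerTerm q ρ y x k) (mehlerSum q ρ y x k) := fun k =>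
    (summable_mehlerTerm hq hρ hx hy k).hasSum
  have shift : ∀ {f : ℕ → ℝ} {a : ℝ}, f 0 = 0 → HasSum (fun j => f (j + 1)) a → HasSum f a :=
    fun {f a} h0 h => by simpa [h0] using (hasSum_nat_add_iff 1).mp h
  have hne : ∀ j, qFact q j ≠ 0 := fun j => (qFact_pos hq j).ne'
  have hne' : ∀ j, qInt q (j + 1) ≠ 0 := fun j => (qInt_succ_pos hq j).ne'
  have inner : HasSum (fun j => ρ ^ (j + 1) / qFact q j * qInt q j * qHermite q (j - 1) y
      * qHermite q (j + m) x) (ρ ^ 2 * mehlerSum q ρ y x (m + 1)) := by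
    refine shift (by simp [qInt_zero]) (((hS (m + 1)).mul_left (ρ ^ 2)).congr_fun fun j => ?_)
    have := hne j
    have := hne' j
    rw [mehlerTerm, qFact_succ, Nat.add_sub_cancel, show j + (m + 1) = j + 1 + m by ring]
    field_simp
    ring
  have outer : HasSum (fun j => ρ ^ j / qFact q j * qInt q j * qHermite q j y
      * qHermite q (j + m - 1) x)
      (ρ * y * mehlerSum q ρ y x m - ρ ^ 2 * mehlerSum q ρ y x (m + 1)) := by
    refine shift (by simp [qInt_zero])
      ((((hS m).mul_left (ρ * y)).sub inner).congr_fun fun j => ?_)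
    have := hne j
    have := hne' j
    rw [mehlerTerm, qFact_succ, qHermite_succ, show j + 1 + m - 1 = j + m by omega]
    field_simp
    ring
  have total := ((hS (m + 1)).add ((hS (m - 1)).mul_left (qInt q m))).add
    (outer.mul_left (q ^ m))
  have := total.unique (((hS m).mul_left x).congr_fun fun j => ?_)
  · linear_combination this
  · have h := qHermite_succ q x (j + m)
    have h' : qInt q m * qHermite q (j + (m - 1)) x = qInt q m * qHermite q (j + m - 1) x := by
      rcases m with _ | m
      · simp [qInt_zero]
      · rfl
    rw [add_comm j m, qInt_add, add_comm m j] at h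
    simp only [mehlerTerm]
    rw [← add_assoc j m 1]
    linear_combination (ρ ^ j / qFact q j * qHermite q j y) * (h + h')

lemma qPoch_mul_mehlerSum {q ρ x y : ℝ} (hq : |q| < 1) (hρ : |ρ| < 1)
    (hx : x ∈ Sq q) (hy : y ∈ Sq q) (m : ℕ) :
    qPoch (ρ ^ 2) q m * mehlerSum q ρ y x m = ASC q y ρ m x * mehlerSum q ρ y x 0 := by
  induction m using Nat.twoStepInduction with
  | zero => simp [qPoch, ASC]
  | one =>
    have h := mehlerSum_recurrence hq hρ hx hy 0
    simp [qInt_zero] at h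
    simpa [qPoch, ASC] using h
  | more n h0 h1 =>
    have h := mehlerSum_recurrence hq hρ hx hy (n + 1)
    rw [Nat.add_sub_cancel] at h
    rw [qPoch_succ] at h1
    rw [ASC_succ_succ, qPoch_succ, qPoch_succ]
    linear_combination qPoch (ρ ^ 2) q n * (1 - ρ ^ 2 * q ^ n) * h
      + (x - ρ * y * q ^ (n + 1)) * h1
      - (1 - ρ ^ 2 * q ^ n) * qInt q (n + 1) * h0

/-! ### The connection between `q`-Hermite and Al-Salam–Chihara polynomials -/

lemma qInt_mul_sum_antidiagonal (q : ℝ) (p h : ℕ → ℝ) (N : ℕ) :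
    qInt q (N + 1) * ∑ i ∈ antidiagonal (N + 1), p i.1 * h i.2
      = ∑ i ∈ antidiagonal N, (qInt q (i.1 + 1) * p (i.1 + 1)) * h i.2
        + ∑ i ∈ antidiagonal N, q ^ i.1 * p i.1 * (qInt q (i.2 + 1) * h (i.2 + 1)) := by
  have h1 := Finset.Nat.sum_antidiagonal_succ (n := N)
    (f := fun i => qInt q i.1 * p i.1 * h i.2)
  have h2 := Finset.Nat.sum_antidiagonal_succ' (n := N)
    (f := fun i => q ^ i.1 * p i.1 * (qInt q i.2 * h i.2))
  simp only [qInt_zero, zero_mul, mul_zero, zero_add] at h1 h2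
  rw [← h1, ← h2, Finset.mul_sum, ← Finset.sum_add_distrib]
  refine Finset.sum_congr rfl fun i hi => ?_
  rw [← mem_antidiagonal.mp hi, qInt_add]
  ring

lemma sum_ASC_mul_qHermite {q : ℝ} (hq : |q| < 1) (r y z : ℝ) (N : ℕ) :
    ∑ i ∈ antidiagonal N, ASC q y r i.1 z / qFact q i.1 * (r ^ i.2 * qHermite q i.2 y / qFact q i.2)
      = qHermite q N z / qFact q N := by
  set p : ℕ → ℝ := fun n => ASC q y r n z / qFact q n with hp
  set h : ℕ → ℝ := fun n => r ^ n * qHermite q n y / qFact q n with hh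
  have hne : ∀ j, qFact q j ≠ 0 := fun j => (qFact_pos hq j).ne'
  have hne' : ∀ j, qInt q (j + 1) ≠ 0 := fun j => (qInt_succ_pos hq j).ne'
  have p0 : p 0 = 1 := by simp [hp, ASC, qFact]
  have h0 : h 0 = 1 := by simp [hh, qHermite, qFact]
  have p1 : qInt q 1 * p 1 = z - r * y := by
    have := hne' 0
    simp [hp, ASC, qFact] at *
    field_simp
  have h1 : qInt q 1 * h 1 = r * y := by
    have := hne' 0
    simp [hh, qHermite, qFact] at *
    field_simp
  have ps : ∀ n, qInt q (n + 2) * p (n + 2)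
      = (z - r * y * q ^ (n + 1)) * p (n + 1) - (1 - r ^ 2 * q ^ n) * p n := by
    intro n
    have := hne n
    have := hne' n
    have := hne' (n + 1)
    simp only [hp, qFact_succ, ASC_succ_succ]
    field_simp
  have hs : ∀ n, qInt q (n + 2) * h (n + 2) = r * y * h (n + 1) - r ^ 2 * h n := by
    intro n
    have := hne n
    have := hne' n
    have := hne' (n + 1)
    simp only [hh, qFact_succ, qHermite]
    field_simp
    ring
  change ∑ i ∈ antidiagonal N, p i.1 * h i.2 = _
  induction N using Nat.twoStepInduction with
  | zero => simp [p0, h0, qHermite, qFact]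
  | one =>
    have e := qInt_mul_sum_antidiagonal q p h 0
    simp only [Finset.Nat.antidiagonal_zero, sum_singleton, zero_add, p0, h0, p1, h1, pow_zero] at e
    rw [eq_div_iff (hne 1)]
    simp only [qFact, qHermite, prod_range_one, zero_add]
    linear_combination e
  | more n ih0 ih1 =>
    have e := qInt_mul_sum_antidiagonal q p h (n + 1)
    have A : ∑ i ∈ antidiagonal (n + 1), (qInt q (i.1 + 1) * p (i.1 + 1)) * h i.2
        = z * ∑ i ∈ antidiagonal (n + 1), p i.1 * h i.2
          - r * y * ∑ i ∈ antidiagonal (n + 1), q ^ i.1 * p i.1 * h i.2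
          - ∑ i ∈ antidiagonal n, p i.1 * h i.2
          + r ^ 2 * ∑ i ∈ antidiagonal n, q ^ i.1 * p i.1 * h i.2 := by
      simp only [Finset.Nat.sum_antidiagonal_succ, zero_add, p1, ps, p0, pow_zero, mul_add,
        Finset.mul_sum, sub_mul, Finset.sum_sub_distrib]
      ring_nf
    have B : ∑ i ∈ antidiagonal (n + 1), q ^ i.1 * p i.1 * (qInt q (i.2 + 1) * h (i.2 + 1))
        = r * y * ∑ i ∈ antidiagonal (n + 1), q ^ i.1 * p i.1 * h i.2
          - r ^ 2 * ∑ i ∈ antidiagonal n, q ^ i.1 * p i.1 * h i.2 := by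
      simp only [Finset.Nat.sum_antidiagonal_succ', zero_add, h1, hs, h0, mul_add,
        Finset.mul_sum, mul_sub, Finset.sum_sub_distrib]
      ring_nf
    rw [A, B, ih0, ih1] at e
    have e' : qInt q (n + 2) * ∑ i ∈ antidiagonal (n + 2), p i.1 * h i.2
        = z * (qHermite q (n + 1) z / qFact q (n + 1)) - qHermite q n z / qFact q n := by
      linear_combination e
    have := hne n
    have := hne' n
    have := hne' (n + 1)
    rw [← mul_right_inj' (hne' (n + 1)), e']
    simp only [qFact_succ, qHermite]
    field_simp

/-! ### The kernel as a quotient of Poisson–Mehler kernels -/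

lemma hasSum_kernel_mul_mehlerSum {q ρ₁ ρ₂ x y z : ℝ} (hq : |q| < 1) (h0 : ρ₁ ≠ 0)
    (h1 : |ρ₁| < 1) (h2 : |ρ₂| < 1) (hx : x ∈ Sq q) (hy : y ∈ Sq q) (hz : z ∈ Sq q) :
    HasSum (fun n : ℕ => ρ₁ ^ n / (qFact q n * qPoch (ρ₂ ^ 2) q n) *
        ASC q y ρ₂ n x * ASC q y (ρ₂ / ρ₁) n z * mehlerSum q ρ₂ y x 0)
      (mehlerSum q ρ₁ z x 0) := by
  have hT := summable_double (ρ₂ / ρ₁) hq h1 h2 hx hy hz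
  obtain ⟨S, hS⟩ := hT
  have rows := hS.prod_fiberwise fun n =>
    (summable_mehlerTerm hq h2 hx hy n).hasSum.mul_left
      (ρ₁ ^ n / qFact q n * ASC q y (ρ₂ / ρ₁) n z)
  have diags := ((Finset.HasAntidiagonal.sigmaAntidiagonalEquivProd (A := ℕ)).hasSum_iff.mpr hS).sigma
    fun N => hasSum_fintype _
  have hdiag : S = mehlerSum q ρ₁ z x 0 := by
    refine diags.unique ((summable_mehlerTerm hq h1 hx hz 0).hasSum.congr_fun fun N => ?_)
    refine (Finset.sum_attach (antidiagonal N)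
      (fun p : ℕ × ℕ => ρ₁ ^ p.1 / qFact q p.1 * ASC q y (ρ₂ / ρ₁) p.1 z
        * mehlerTerm q ρ₂ y x p.1 p.2)).trans ?_
    have := sum_ASC_mul_qHermite hq (ρ₂ / ρ₁) y z N
    rw [mehlerTerm, add_zero, div_mul_eq_mul_div, mul_div_assoc, ← this, Finset.mul_sum,
      Finset.sum_mul]
    refine Finset.sum_congr rfl fun i hi => ?_
    rw [← mem_antidiagonal.mp hi, mehlerTerm, div_pow, pow_add, add_comm i.2]
    have := (qFact_pos hq i.1).ne'
    have := (qFact_pos hq i.2).ne'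
    field_simp
  rw [← hdiag]
  refine rows.congr_fun fun n => ?_
  have h := qPoch_mul_mehlerSum hq h2 hx hy n
  have hp := qPoch_sq_ne_zero hq h2 n
  have := (qFact_pos hq n).ne'
  change _ = ρ₁ ^ n / qFact q n * ASC q y (ρ₂ / ρ₁) n z * mehlerSum q ρ₂ y x n
  field_simp
  linear_combination -(ASC q y (ρ₂ / ρ₁) n z) * h

lemma mehlerSum_self_pos {q ρ x : ℝ} (hq : |q| < 1) (h0 : 0 < ρ) (h1 : ρ < 1) (hx : x ∈ Sq q) :
    0 < mehlerSum q ρ x x 0 := by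
  have hs := summable_mehlerTerm hq (by rwa [abs_of_pos h0]) hx hx 0
  have nonneg : ∀ j, 0 ≤ mehlerTerm q ρ x x 0 j := fun j => by
    have := qFact_pos hq j
    rw [mehlerTerm, add_zero, mul_assoc]
    exact mul_nonneg (by positivity) (mul_self_nonneg _)
  exact hs.tsum_pos nonneg 0 (by simp [mehlerTerm, qFact, qHermite])

lemma mehlerSum_ne_zero {q ρ x y : ℝ} (hq : |q| < 1) (hρ : |ρ| < 1)
    (hx : x ∈ Sq q) (hy : y ∈ Sq q) : mehlerSum q ρ y x 0 ≠ 0 := by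
  intro h
  have hk := hasSum_kernel_mul_mehlerSum (ρ₁ := 1 / 2) hq (by norm_num)
    (by norm_num [abs_of_pos]) hρ hx hy hx
  simp only [h, mul_zero] at hk
  have pos := mehlerSum_self_pos (ρ := 1 / 2) hq (by norm_num) (by norm_num) hx
  exact pos.ne (hasSum_zero.unique hk)

lemma hasSum_kernel {q ρ₁ ρ₂ x y z : ℝ} (hq : |q| < 1) (h0 : ρ₁ ≠ 0)
    (h1 : |ρ₁| < 1) (h2 : |ρ₂| < 1) (hx : x ∈ Sq q) (hy : y ∈ Sq q) (hz : z ∈ Sq q) :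
    HasSum (fun n : ℕ => ρ₁ ^ n / (qFact q n * qPoch (ρ₂ ^ 2) q n) *
        ASC q y ρ₂ n x * ASC q y (ρ₂ / ρ₁) n z)
      (mehlerSum q ρ₁ z x 0 / mehlerSum q ρ₂ y x 0) := by
  have hne := mehlerSum_ne_zero hq h2 hx hy
  simpa [mul_div_assoc, hne] using
    (hasSum_kernel_mul_mehlerSum hq h0 h1 h2 hx hy hz).div_const (mehlerSum q ρ₂ y x 0)

/-- reciprocal of the Al-Salam–Chihara kernel. -/
theorem ASC_kernel_reciprocal (q ρ₁ ρ₂ x y z : ℝ) (hq : |q| < 1)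
    (h1 : 0 < |ρ₁|) (h1' : |ρ₁| < 1) (h2 : 0 < |ρ₂|) (h2' : |ρ₂| < 1)
    (hx : x ∈ Sq q) (hy : y ∈ Sq q) (hz : z ∈ Sq q) :
    (∑' n : ℕ, ρ₁ ^ n / (qFact q n * qPoch (ρ₂ ^ 2) q n) *
        ASC q y ρ₂ n x * ASC q y (ρ₂ / ρ₁) n z) ≠ 0 ∧
    HasSum (fun n : ℕ => ρ₂ ^ n / (qFact q n * qPoch (ρ₁ ^ 2) q n) *
        ASC q z ρ₁ n x * ASC q z (ρ₁ / ρ₂) n y)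
      (∑' n : ℕ, ρ₁ ^ n / (qFact q n * qPoch (ρ₂ ^ 2) q n) *
        ASC q y ρ₂ n x * ASC q y (ρ₂ / ρ₁) n z)⁻¹ := by
  rw [(hasSum_kernel hq (abs_pos.mp h1) h1' h2' hx hy hz).tsum_eq, inv_div]
  exact ⟨div_ne_zero (mehlerSum_ne_zero hq h1' hx hz) (mehlerSum_ne_zero hq h2' hx hy),
    hasSum_kernel hq (abs_pos.mp h2) h2' h1' hx hz hy⟩
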